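/- Let f : ℕ → ℝ be the function computed by a black box trained for language modelling over a one-letter alphabet, i.e. f(m) ≥ 0 for all m and Σ_{m≥0} f(m) = 1, let H = H_f, and for n ∈ ℕ let H^n = H_{f^n} be the truncated Hankel operator, where f^n(m) = f(m) for m ≤ n and f^n(m) = 0 for m > n. Let k < n and let G be a bounded linear operator on ℓ²(ℕ) whose range has dimension at most k and which is an optimal rank-k approximation of H^n in the sense that ‖H^n − G‖ = σ_k(H^n) (by the AAK theorem such a G exists and can be taken to be a Hankel operator). Then σ_k(H) ≤ ‖H − G‖ ≤ σ_k(H) + 2·(1 − Σ_{i=0}^{n} f(i)). -/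

import Mathlib

/-!
The Hankel operator of a nonnegative summable symbol `g` has norm at most `∑ g`: this is Schur's
test, since every row and every column of the matrix `g (i + j)` has sum at most `∑ g`
(`IsHankelOp.norm_le`). Applied to the tail `f - trunc f n`, it gives
`‖H - Hn‖ ≤ δ` with `δ = 1 - ∑ i ≤ n, f i`. Approximation numbers are 1-Lipschitz in the
operator norm (`approxNum_le_add`), so
`‖H - G‖ ≤ ‖H - Hn‖ + σ_k(Hn) ≤ δ + (σ_k(H) + δ)`. The lower bound holds because `G` is a
competitor in the infimum defining `σ_k(H)`.
-/

/-- `L2` is the Hilbert space `ℓ²(ℕ)` of square-summable real sequences. -/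
noncomputable abbrev L2 : Type := lp (fun _ : ℕ => ℝ) 2

/-- `IsHankelOp f T` says that the bounded linear operator `T` on `ℓ²(ℕ)` is the
Hankel operator associated with `f : ℕ → ℝ`, i.e. for every `x ∈ ℓ²(ℕ)` and every
`i ∈ ℕ` the series `Σ_{j≥0} f(i+j)·x(j)` converges and equals `(T x)(i)`. -/
def IsHankelOp (f : ℕ → ℝ) (T : L2 →L[ℝ] L2) : Prop :=
  ∀ x : L2, ∀ i : ℕ, HasSum (fun j : ℕ => f (i + j) * x j) (T x i)

/-- The truncation `f^n` of `f` : `f^n(m) = f(m)` for `m ≤ n` and `0` otherwise. -/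
def trunc (f : ℕ → ℝ) (n : ℕ) : ℕ → ℝ := fun m => if m ≤ n then f m else 0

/-- The `k`-th approximation number of a bounded linear operator `T` on `ℓ²(ℕ)`:
`σ_k(T) = inf { ‖T − F‖ : F bounded linear with range of dimension at most k }`. -/
noncomputable def approxNum (T : L2 →L[ℝ] L2) (k : ℕ) : ℝ :=
  sInf { r : ℝ | ∃ F : L2 →L[ℝ] L2,
    Module.rank ℝ (LinearMap.range (F : L2 →ₗ[ℝ] L2)) ≤ k ∧ r = ‖T - F‖ }

theorem sum_add_le {g : ℕ → ℝ} {S : ℝ} (hg : ∀ m, 0 ≤ g m) (hS : HasSum g S) (i : ℕ)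
    (t : Finset ℕ) : ∑ j ∈ t, g (i + j) ≤ S := by
  have h := sum_le_hasSum (t.map (addLeftEmbedding i)) (fun m _ => hg m) hS
  simpa [Finset.sum_map] using h

/-- Schur's test for a Hankel matrix with nonnegative entries: the symbol's sum bounds every row
sum and every column sum, hence the operator norm. -/
theorem IsHankelOp.norm_le {g : ℕ → ℝ} {S : ℝ} {T : L2 →L[ℝ] L2} (hT : IsHankelOp g T)
    (hg : ∀ m, 0 ≤ g m) (hS : HasSum g S) : ‖T‖ ≤ S := by
  have hS0 : 0 ≤ S := hS.nonneg hg
  refine T.opNorm_le_bound hS0 fun x => ?_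
  have h2 : (0 : ℝ) < (2 : ENNReal).toReal := by norm_num
  have hx : HasSum (fun j => x j ^ 2) (‖x‖ ^ 2) := by
    simpa using lp.hasSum_norm h2 x
  have hsum : ∀ i, Summable fun j => g (i + j) * x j ^ 2 := fun i =>
    Summable.of_nonneg_of_le (fun j => mul_nonneg (hg _) (sq_nonneg _))
      (fun j => mul_le_mul_of_nonneg_right (le_hasSum hS (i + j) fun m _ => hg m) (sq_nonneg _))
      (hx.summable.mul_left S)
  -- Cauchy–Schwarz with weights `g (i + j)`, using the row sum bound.
  have hrow : ∀ i, (T x i) ^ 2 ≤ S * ∑' j, g (i + j) * x j ^ 2 := fun i => by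
    refine le_of_tendsto' ((hT x i).pow 2) fun t => ?_
    calc (∑ j ∈ t, g (i + j) * x j) ^ 2
        ≤ (∑ j ∈ t, g (i + j)) * ∑ j ∈ t, g (i + j) * x j ^ 2 :=
          Finset.sum_sq_le_sum_mul_sum_of_sq_le_mul t (fun j _ => hg _)
            (fun j _ => mul_nonneg (hg _) (sq_nonneg _)) (fun j _ => le_of_eq (by ring))
      _ ≤ S * ∑' j, g (i + j) * x j ^ 2 :=
          mul_le_mul (sum_add_le hg hS i t)
            ((hsum i).sum_le_tsum t fun j _ => mul_nonneg (hg _) (sq_nonneg _))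
            (Finset.sum_nonneg fun j _ => mul_nonneg (hg _) (sq_nonneg _)) hS0
  refine lp.norm_le_of_forall_sum_le h2 (by positivity) fun s => ?_
  -- Exchanging the sums brings in the column sum bound.
  have hcol : ∑ i ∈ s, ∑' j, g (i + j) * x j ^ 2 ≤ S * ‖x‖ ^ 2 := by
    refine hasSum_le (fun j => ?_) (hasSum_sum fun i _ => (hsum i).hasSum) (hx.mul_left S)
    rw [← Finset.sum_mul]
    refine mul_le_mul_of_nonneg_right ?_ (sq_nonneg _)
    simpa only [add_comm j] using sum_add_le hg hS j s
  have hmain : ∑ i ∈ s, (T x i) ^ 2 ≤ (S * ‖x‖) ^ 2 := by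
    calc ∑ i ∈ s, (T x i) ^ 2
        ≤ ∑ i ∈ s, S * ∑' j, g (i + j) * x j ^ 2 := Finset.sum_le_sum fun i _ => hrow i
      _ = S * ∑ i ∈ s, ∑' j, g (i + j) * x j ^ 2 := (Finset.mul_sum _ _ _).symm
      _ ≤ S * (S * ‖x‖ ^ 2) := mul_le_mul_of_nonneg_left hcol hS0
      _ = (S * ‖x‖) ^ 2 := by ring
  simpa using hmain

theorem approxNum_le (T F : L2 →L[ℝ] L2) (k : ℕ)
    (hF : Module.rank ℝ (LinearMap.range (F : L2 →ₗ[ℝ] L2)) ≤ k) :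
    approxNum T k ≤ ‖T - F‖ :=
  csInf_le ⟨0, by rintro r ⟨F, -, rfl⟩; exact norm_nonneg _⟩ ⟨F, hF, rfl⟩

theorem approxNum_le_add (T U : L2 →L[ℝ] L2) (k : ℕ) :
    approxNum T k ≤ approxNum U k + ‖U - T‖ := by
  rw [← sub_le_iff_le_add]
  -- The zero operator shows that the infimum is over a nonempty set.
  refine le_csInf ⟨_, 0, by simp, rfl⟩ ?_
  rintro r ⟨F, hF, rfl⟩
  have h1 := approxNum_le T F k hF
  have h2 := norm_sub_le_norm_sub_add_norm_sub T U F
  rw [norm_sub_rev T U] at h2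
  linarith

theorem hasSum_trunc (f : ℕ → ℝ) (n : ℕ) :
    HasSum (trunc f n) (∑ i ∈ Finset.range (n + 1), f i) := by
  have h : ∑ i ∈ Finset.range (n + 1), f i = ∑ i ∈ Finset.range (n + 1), trunc f n i :=
    Finset.sum_congr rfl fun i hi => by
      simp [trunc, Nat.lt_succ_iff.mp (Finset.mem_range.mp hi)]
  rw [h]
  refine hasSum_sum_of_ne_finset_zero fun i hi => ?_
  have : ¬ i ≤ n := fun h => hi (Finset.mem_range.mpr (Nat.lt_succ_of_le h))
  simp [trunc, this]

/-- let `f` be a probability distribution on `ℕ` with Hankel operator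
`H`, let `H^n` be the Hankel operator of the truncation `f^n`, let `k < n`, and let
`G` be an operator of rank at most `k` which is an optimal rank-`k` approximation
of `H^n`, i.e. `‖H^n − G‖ = σ_k(H^n)`. Then
`σ_k(H) ≤ ‖H − G‖ ≤ σ_k(H) + 2·(1 − Σ_{i=0}^n f(i))`. -/
theorem asymptotically_optimal_approximation (f : ℕ → ℝ)
    (hf_nonneg : ∀ m, 0 ≤ f m) (hf_sum : HasSum f 1)
    (n k : ℕ) (hkn : k < n) (H Hn : L2 →L[ℝ] L2)
    (hH : IsHankelOp f H) (hHn : IsHankelOp (trunc f n) Hn)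
    (G : L2 →L[ℝ] L2)
    (hG_rank : Module.rank ℝ (LinearMap.range (G : L2 →ₗ[ℝ] L2)) ≤ k)
    (hG_opt : ‖Hn - G‖ = approxNum Hn k) :
    approxNum H k ≤ ‖H - G‖ ∧
      ‖H - G‖ ≤ approxNum H k + 2 * (1 - ∑ i ∈ Finset.range (n + 1), f i) := by
  refine ⟨approxNum_le H G k hG_rank, ?_⟩
  have hD : IsHankelOp (fun m => f m - trunc f n m) (H - Hn) := fun x i => by
    simpa [sub_mul] using (hH x i).sub (hHn x i)
  have hD_nonneg : ∀ m, 0 ≤ f m - trunc f n m := fun m => by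
    by_cases h : m ≤ n <;> simp [trunc, h, hf_nonneg m]
  have hnorm := hD.norm_le hD_nonneg (hf_sum.sub (hasSum_trunc f n))
  have h1 := approxNum_le_add Hn H k
  have h2 := norm_sub_le_norm_sub_add_norm_sub H Hn G
  linarith
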